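/- (Discrete Hardy–Littlewood inequality.) Let d ≥ 2 and let u, v : ℤ^d → [0,∞) be admissible. Then Σ_{x∈ℤ^d} u(x) v(x) ≤ Σ_{x∈ℤ^d} u*(x) v*(x), where the sums are taken in [0,∞] and u* = R_{ℤ^d} u, v* = R_{ℤ^d} v. Moreover, if u is Schwarz symmetric with strictly decreasing values a₁(u) > a₂(u) > a₃(u) > ⋯ and Σ_{x∈ℤ^d} u*(x) v*(x) < ∞, then equality holds if and only if v = v*. -/

import Mathlib

open Filter Topology

noncomputable section

abbrev ZLat (d : ℕ) := Fin d → ℤ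

def stdVec (d : ℕ) (i : Fin d) : Fin d → ℝ := fun j => if j = i then 1 else 0

/-- The set of directions E⃗ ⊆ ℝ^d. -/
def Evec (d : ℕ) : Set (Fin d → ℝ) :=
  {e | (∃ i, e = stdVec d i) ∨
    (∃ i j : Fin d, i < j ∧ e = fun k => (stdVec d i k + stdVec d j k) / 2) ∨
    (∃ i j : Fin d, i < j ∧ e = fun k => (stdVec d i k - stdVec d j k) / 2)}

/-- A fixed enumeration of E⃗ (for d = 2 it is e₁, e₂, (e₁+e₂)/2, (e₁-e₂)/2). -/
def EvecList (d : ℕ) : List (Fin d → ℝ) :=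
  ((List.finRange d).map (stdVec d)) ++
  ((List.finRange d).flatMap fun i => (List.finRange d).filterMap fun j =>
    if i < j then some (fun k => (stdVec d i k + stdVec d j k) / 2) else none) ++
  ((List.finRange d).flatMap fun i => (List.finRange d).filterMap fun j =>
    if i < j then some (fun k => (stdVec d i k - stdVec d j k) / 2) else none)

/-- The n-th largest value of `u`, counted with multiplicity (1-indexed). -/
def nthLargest {α : Type*} (u : α → NNReal) (n : ℕ) : NNReal :=
  sSup {t | ∃ Ω : Finset α, Ω.card = n ∧ ∀ x ∈ Ω, t ≤ u x}

/-- The 1-indexed position of the point with doubled coordinate `m` in the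
spiral order 0, 1, −1, 2, −2, … (for even m) resp. 1/2, −1/2, 3/2, −3/2, … (for odd m). -/
def posIdx (m : ℤ) : ℕ := (if 0 < m then m else 1 - m).toNat

/-- `x` and `y` lie on a common line with direction `e`. -/
def sameLine {d : ℕ} (e : Fin d → ℝ) (x y : ZLat d) : Prop :=
  ∃ c : ℝ, (fun i => (x i : ℝ) - (y i : ℝ)) = c • e

/-- Twice the inner product ⟨e, x⟩, as an integer. -/
def pairing {d : ℕ} (e : Fin d → ℝ) (x : ZLat d) : ℤ :=
  ⌊2 * ∑ i, e i * (x i : ℝ)⌋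

/-- One-step rearrangement `R_e`. -/
def stepR {d : ℕ} (e : Fin d → ℝ) (u : ZLat d → NNReal) : ZLat d → NNReal :=
  fun x => nthLargest (fun y : {y : ZLat d // sameLine e x y} => u y.1) (posIdx (pairing e x))

/-- `R^k u` : k successive one-step rearrangements cycling through the fixed enumeration. -/
def iterR (d : ℕ) (u : ZLat d → NNReal) : ℕ → ZLat d → NNReal
  | 0 => u
  | k + 1 => stepR ((EvecList d).getD (k % (EvecList d).length) 0) (iterR d u k)

/-- The Schwarz rearrangement on ℤ^d : pointwise limit of `R^k u`. -/
def RZd (d : ℕ) (u : ZLat d → NNReal) : ZLat d → NNReal :=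
  fun x => limUnder atTop fun k => iterR d u k x

def Admissible {α : Type*} (u : α → NNReal) : Prop :=
  ∀ t : NNReal, 0 < t → {x | t < u x}.Finite

def Equimeasurable {α : Type*} (u v : α → NNReal) : Prop :=
  ∀ t : NNReal, 0 < t → Nonempty ({x | t < u x} ≃ {x | t < v x})

/-- Graph distance (ℓ¹ distance) on the lattice ℤ^d. -/
def latDist {d : ℕ} (x y : ZLat d) : ℕ := ∑ i, (x i - y i).natAbs

/-- The i-th standard basis vector of ℤ^d. -/
def latE {d : ℕ} (i : Fin d) : ZLat d := fun j => if j = i then 1 else 0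

/-- ‖∇u‖_p^p : the p-Sobolev energy, summing over each edge {x, x+e_i} once. -/
def gradEnergy (d : ℕ) (p : ℝ) (u : ZLat d → NNReal) : ENNReal :=
  ∑' (x : ZLat d) (i : Fin d), ENNReal.ofReal (|(u (x + latE i) : ℝ) - (u x : ℝ)| ^ p)

/-- ‖∇u‖_p. -/
def gradNorm (d : ℕ) (p : ℝ) (u : ZLat d → NNReal) : ENNReal :=
  gradEnergy d p u ^ (1 / p)

/-- Graph automorphism of the lattice graph ℤ^d. -/
def IsLatAuto {d : ℕ} (σ : ZLat d ≃ ZLat d) : Prop :=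
  ∀ x y : ZLat d, latDist (σ x) (σ y) = 1 ↔ latDist x y = 1

def Supermodular (G : NNReal → NNReal → NNReal) : Prop :=
  ∀ s t s₀ t₀ : NNReal, G (s + s₀) t + G s (t + t₀) ≤ G (s + s₀) (t + t₀) + G s t

def StrictlySupermodular (G : NNReal → NNReal → NNReal) : Prop :=
  ∀ s t s₀ t₀ : NNReal, 0 < s₀ → 0 < t₀ →
    G (s + s₀) t + G s (t + t₀) < G (s + s₀) (t + t₀) + G s t

/-- The values of `u` are strictly decreasing: a₁ > a₂ > a₃ > ⋯ . -/
def StrictRan {α : Type*} (u : α → NNReal) : Prop :=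
  ∀ n : ℕ, 0 < n → nthLargest u (n + 1) < nthLargest u n

/-!
Rearrangements act on superlevel sets, so everything reduces to finite sets. One step replaces a
set by the one which occupies, on each line, the first places of the spiral order; this cannot
decrease `#(A ∩ B)`. The directions are the half-coroots of the positive roots of `B_d`, and moving
down in the spiral order of such a line brings a point closer to a fixed interior point of the
fundamental alcove. Hence the sum of the squared distances to that point decreases strictly with
each step that changes the set, every superlevel set becomes stationary, and the layer-cake formula
turns `#(A ∩ B) ≤ #(A* ∩ B*)` into the inequality.

In the equality case every step fixes `u` and preserves `∑ u v`. A step that changes `v` acts on a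
line with an inverted pair of values; exchanging these two values first leaves the rearrangement of
`v` unchanged but raises `∑ u v` strictly, provided that `u` is injective. Injectivity holds because
strict decrease makes the support of `u` infinite, and an infinite set without gaps along the root
directions is the whole lattice.
-/

open scoped NNReal ENNReal

/-! ### Superlevel sets -/

section Superlevel

variable {α : Type*} {u v : α → ℝ≥0}

theorem eq_of_superlevel_eq (h : ∀ t : ℝ≥0, 0 < t → {x | t < u x} = {x | t < v x}) : u = v := by
  have le_of_superlevel_eq {u v : α → ℝ≥0}
      (h : ∀ t : ℝ≥0, 0 < t → {x | t < u x} = {x | t < v x}) (x : α) : u x ≤ v x := by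
    refine le_of_forall_lt fun t ht => ?_
    obtain ⟨s, hts, hs⟩ := exists_between ht
    exact hts.trans ((Set.ext_iff.mp (h s (pos_of_gt hts)) x).mp hs)
  funext x
  exact le_antisymm (le_of_superlevel_eq h x)
    (le_of_superlevel_eq (fun t ht => (h t ht).symm) x)

theorem Admissible.bddAbove_range (hu : Admissible u) : BddAbove (Set.range u) := by
  obtain ⟨M, hM⟩ := ((hu 1 one_pos).image u).bddAbove
  refine ⟨max M 1, Set.forall_mem_range.mpr fun x => ?_⟩
  rcases lt_or_ge 1 (u x) with hx | hx
  · exact le_max_of_le_left (hM ⟨x, hx, rfl⟩)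
  · exact le_max_of_le_right hx

theorem Admissible.comp_injective (hu : Admissible u) {β : Type*} {f : β → α}
    (hf : Function.Injective f) : Admissible (u ∘ f) :=
  fun t ht => Set.Finite.preimage (s := {x | t < u x}) hf.injOn (hu t ht)

theorem Admissible.exists_gt_superlevel_eq (hu : Admissible u) {t : ℝ≥0} (ht : 0 < t) :
    ∃ s, t < s ∧ {x | s < u x} = {x | t < u x} := by
  rcases Set.eq_empty_or_nonempty {x | t < u x} with hempty | hne
  · refine ⟨t + 1, lt_add_one t, ?_⟩
    rw [hempty, ← Set.subset_empty_iff, ← hempty]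
    exact fun x hx => (lt_add_one t).trans hx
  · obtain ⟨m, hm, hmin⟩ := Set.exists_min_image _ u (hu t ht) hne
    obtain ⟨s, hts, hsm⟩ := exists_between (show t < u m from hm)
    exact ⟨s, hts, Set.ext fun x => ⟨fun hx => hts.trans hx, fun hx => hsm.trans_le (hmin x hx)⟩⟩

theorem lt_nthLargest_add_one_iff (hu : BddAbove (Set.range u)) {n : ℕ} {t : ℝ≥0} :
    t < nthLargest u (n + 1) ↔ (n : ℕ∞) < {x | t < u x}.encard := by
  have hbdd : BddAbove {s | ∃ Ω : Finset α, Ω.card = n + 1 ∧ ∀ x ∈ Ω, s ≤ u x} := by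
    obtain ⟨M, hM⟩ := hu
    exact ⟨M, fun s ⟨Ω, hcard, hs⟩ => by
      obtain ⟨x, hx⟩ := Finset.card_pos.mp (n.succ_pos.trans_eq hcard.symm)
      exact (hs x hx).trans (hM ⟨x, rfl⟩)⟩
  rw [← ENat.add_one_le_iff (ENat.natCast_ne_top n)]
  constructor
  · intro h
    obtain ⟨s, ⟨Ω, hcard, hs⟩, hts⟩ := exists_lt_of_lt_csSup' h
    calc (n + 1 : ℕ∞) = (Ω : Set α).encard := by
          rw [Set.encard_coe_eq_coe_finsetCard, hcard, Nat.cast_add_one]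
      _ ≤ {x | t < u x}.encard := Set.encard_le_encard fun x hx => hts.trans_le (hs x hx)
  · intro h
    obtain ⟨Ω, hΩ, hcard⟩ := Set.exists_subset_encard_eq h
    lift Ω to Finset α using Set.finite_of_encard_eq_coe (k := n + 1) (by exact_mod_cast hcard)
    rw [Set.encard_coe_eq_coe_finsetCard] at hcard
    have hcard' : Ω.card = n + 1 := by exact_mod_cast hcard
    obtain ⟨m, hm, hmin⟩ := Ω.exists_min_image u (Finset.card_pos.mp (by omega))
    exact (hΩ hm).trans_le (le_csSup hbdd ⟨Ω, hcard', hmin⟩)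

theorem nthLargest_comp_equiv {β : Type*} (e : β ≃ α) (n : ℕ) :
    nthLargest (u ∘ e) n = nthLargest u n := by
  unfold nthLargest
  congr 1
  ext t
  constructor
  · rintro ⟨Ω, hcard, hΩ⟩
    exact ⟨Ω.map e.toEmbedding, by rw [Finset.card_map, hcard], Finset.forall_mem_map.mpr hΩ⟩
  · rintro ⟨Ω, hcard, hΩ⟩
    exact ⟨Ω.map e.symm.toEmbedding, by rw [Finset.card_map, hcard],
      fun x hx => hΩ _ (by simpa using hx)⟩

theorem StrictRan.infinite_support (hs : StrictRan u) (hu : Admissible u) :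
    {x | 0 < u x}.Infinite := by
  intro hfin
  have hpos := zero_le.trans_lt (hs ({x | 0 < u x}.ncard + 1) (Nat.succ_pos _))
  rw [lt_nthLargest_add_one_iff hu.bddAbove_range, hfin.cast_ncard_eq] at hpos
  exact lt_irrefl _ hpos

theorem StrictRan.injOn_support (hs : StrictRan u) (hu : Admissible u) :
    Set.InjOn u {x | 0 < u x} := by
  intro a ha b _ hab
  by_contra hne
  obtain ⟨n, hn⟩ : ∃ n : ℕ, {x | u a < u x}.encard = n := ⟨_, (hu (u a) ha).cast_ncard_eq.symm⟩
  have upper : nthLargest u (n + 1) ≤ u a := by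
    rw [← not_lt, lt_nthLargest_add_one_iff hu.bddAbove_range, hn]
    exact lt_irrefl _
  have lower : u a ≤ nthLargest u (n + 1 + 1) := by
    refine le_of_forall_lt fun t ht => (lt_nthLargest_add_one_iff hu.bddAbove_range).mpr ?_
    calc ((n + 1 : ℕ) : ℕ∞) < (n + 1 + 1 : ℕ) := by exact_mod_cast Nat.lt_succ_self _
      _ = (insert a (insert b {x | u a < u x})).encard := by
        rw [Set.encard_insert_of_notMem (by simp [hne]),
          Set.encard_insert_of_notMem (by simp [hab]), hn]
        rfl
      _ ≤ {x | t < u x}.encard := Set.encard_le_encard <| by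
        rintro x (rfl | rfl | hx)
        exacts [ht, ht.trans_eq hab, ht.trans hx]
  exact (hs (n + 1) n.succ_pos).not_ge (upper.trans lower)

end Superlevel

/-! ### Partitions into ranked classes -/

/-- A partition of `X` into classes, each enumerated by `ℕ` through `rank`. This is what one needs
to rearrange along the parallel lines of a lattice; ranks start at `0`. -/
structure RankedPartition (X : Type*) extends Setoid X where
  rank : X → ℕ
  bijective_rank : ∀ x, Function.Bijective fun y : {y // r x y} => rank y

namespace RankedPartition

variable {X : Type*} (S : RankedPartition X) {A B : Set X} {x y : X} {n : ℕ}

/-- The point of rank `n` in the class of `x`. -/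
def pointOfRank (x : X) (n : ℕ) : X :=
  (Equiv.ofBijective _ (S.bijective_rank x)).symm n

theorem rel_pointOfRank : S.r x (S.pointOfRank x n) :=
  ((Equiv.ofBijective _ (S.bijective_rank x)).symm n).2

theorem rank_pointOfRank : S.rank (S.pointOfRank x n) = n :=
  (Equiv.ofBijective _ (S.bijective_rank x)).apply_symm_apply n

variable {S} in
theorem eq_of_rel_of_rank_eq (hxy : S.r x y) (h : S.rank x = S.rank y) : x = y :=
  congrArg Subtype.val <|
    (S.bijective_rank x).injective (a₁ := ⟨x, S.iseqv.refl x⟩) (a₂ := ⟨y, hxy⟩) h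

variable {S} in
theorem pointOfRank_rank (hxy : S.r x y) : S.pointOfRank x (S.rank y) = y :=
  eq_of_rel_of_rank_eq (S.iseqv.trans (S.iseqv.symm S.rel_pointOfRank) hxy) S.rank_pointOfRank

variable {S} in
theorem pointOfRank_congr (hxy : S.r x y) : S.pointOfRank x = S.pointOfRank y := by
  funext n
  conv_rhs => rw [← S.rank_pointOfRank (x := x) (n := n)]
  exact (pointOfRank_rank (S.iseqv.trans (S.iseqv.symm hxy) S.rel_pointOfRank)).symm

theorem encard_class_inter :
    {y | S.r x y ∧ y ∈ A}.encard = {n | S.pointOfRank x n ∈ A}.encard := by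
  have hinj : Function.Injective (S.pointOfRank x) := fun m n h => by
    rw [← S.rank_pointOfRank (x := x) (n := m), h, S.rank_pointOfRank]
  rw [← hinj.encard_image]
  congr 1
  ext y
  constructor
  · rintro ⟨hxy, hy⟩
    exact ⟨S.rank y, by rwa [Set.mem_ofPred_eq, pointOfRank_rank hxy], pointOfRank_rank hxy⟩
  · rintro ⟨n, hn, rfl⟩
    exact ⟨S.rel_pointOfRank, hn⟩

/-- The rearrangement of a set: in each class, it is replaced by the initial segment of the same
cardinality. -/
def rearrangeSet (A : Set X) : Set X := {x | (S.rank x : ℕ∞) < {y | S.r x y ∧ y ∈ A}.encard}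

/-- The rearrangement of a function: in each class, its values are listed in decreasing order. -/
def rearrange (u : X → ℝ≥0) (x : X) : ℝ≥0 :=
  nthLargest (fun y : {y // S.r x y} => u y) (S.rank x + 1)

/-- `A` contains, with each of its points, all points of smaller rank in the same class. -/
def IsLower (A : Set X) : Prop := ∀ ⦃x y⦄, S.r x y → S.rank y < S.rank x → x ∈ A → y ∈ A

/-- `φ` strictly increases with the rank along each class; such functions serve as Lyapunov
functions for rearrangement. -/
def IsPotential (φ : X → ℕ) : Prop := ∀ ⦃x y⦄, S.r x y → S.rank x < S.rank y → φ x < φ y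

/-! ### Rearrangement of sets -/

theorem rearrangeSet_mono (h : A ⊆ B) : S.rearrangeSet A ⊆ S.rearrangeSet B := by
  intro x hx
  have hclass : {y | S.r x y ∧ y ∈ A} ⊆ {y | S.r x y ∧ y ∈ B} := fun _ hy => ⟨hy.1, h hy.2⟩
  exact hx.trans_le (Set.encard_le_encard hclass)

theorem isLower_rearrangeSet (A : Set X) : S.IsLower (S.rearrangeSet A) := by
  intro x y hxy hrank hx
  have hclass : {z | S.r y z ∧ z ∈ A} = {z | S.r x z ∧ z ∈ A} := by
    ext z
    change S.r y z ∧ z ∈ A ↔ S.r x z ∧ z ∈ A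
    exact and_congr_left fun _ => ⟨S.iseqv.trans hxy, S.iseqv.trans (S.iseqv.symm hxy)⟩
  change (S.rank y : ℕ∞) < _
  rw [hclass]
  exact (Nat.cast_lt.mpr hrank).trans hx

open Classical in
/-- Moves every point of `A` down its class, closing the gaps of `A`. -/
def compress (A : Set X) (x : X) : X :=
  S.pointOfRank x (Nat.count (S.pointOfRank x · ∈ A) (S.rank x))

theorem rel_compress : S.r x (S.compress A x) := S.rel_pointOfRank

theorem rank_compress_le : S.rank (S.compress A x) ≤ S.rank x := by
  classical
  rw [compress, rank_pointOfRank]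
  exact Nat.count_le _

theorem finite_setOf_pointOfRank_mem (hA : A.Finite) (x : X) :
    {n | S.pointOfRank x n ∈ A}.Finite := by
  rw [← Set.encard_lt_top_iff, ← S.encard_class_inter]
  exact (hA.subset fun y hy => hy.2).encard_lt_top

theorem mem_rearrangeSet_iff (hA : A.Finite) :
    x ∈ S.rearrangeSet A ↔ S.rank x < (S.finite_setOf_pointOfRank_mem hA x).toFinset.card := by
  rw [rearrangeSet, Set.mem_ofPred_eq, S.encard_class_inter,
    (S.finite_setOf_pointOfRank_mem hA x).encard_eq_coe_toFinset_card, Nat.cast_lt]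

theorem bijOn_compress (hA : A.Finite) : Set.BijOn (S.compress A) A (S.rearrangeSet A) := by
  classical
  have mem_pointOfRank {x : X} (hx : x ∈ A) : S.pointOfRank x (S.rank x) ∈ A := by
    rwa [pointOfRank_rank (S.iseqv.refl x)]
  refine ⟨fun a ha => ?_, fun a ha b hb hab => ?_, fun x hx => ?_⟩
  · rw [S.mem_rearrangeSet_iff hA, compress, rank_pointOfRank]
    simp only [← pointOfRank_congr (S.rel_pointOfRank (x := a))]
    exact Nat.count_lt_card (S.finite_setOf_pointOfRank_mem hA a) (mem_pointOfRank ha)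
  · have hrel : S.r a b :=
      S.iseqv.trans (S.rel_compress (A := A)) (hab ▸ S.iseqv.symm S.rel_compress)
    refine eq_of_rel_of_rank_eq hrel
      (Nat.count_injective (p := (S.pointOfRank a · ∈ A)) (mem_pointOfRank ha) ?_ ?_)
    · rw [pointOfRank_congr hrel]
      exact mem_pointOfRank hb
    · have := congrArg S.rank hab
      rw [compress, compress, rank_pointOfRank, rank_pointOfRank] at this
      simpa only [pointOfRank_congr hrel] using this
  · have hfin := S.finite_setOf_pointOfRank_mem hA x
    have hrank := (S.mem_rearrangeSet_iff hA).mp hx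
    refine ⟨S.pointOfRank x (Nat.nth (S.pointOfRank x · ∈ A) (S.rank x)),
      Nat.nth_mem_of_lt_card hfin hrank, ?_⟩
    simp only [compress, rank_pointOfRank, ← pointOfRank_congr S.rel_pointOfRank]
    rw [Nat.count_nth_of_lt_card_finite hfin hrank, pointOfRank_rank (S.iseqv.refl x)]

theorem finite_rearrangeSet (hA : A.Finite) : (S.rearrangeSet A).Finite :=
  (S.bijOn_compress hA).image_eq ▸ hA.image _

theorem encard_rearrangeSet (hA : A.Finite) : (S.rearrangeSet A).encard = A.encard := by
  rw [← (S.bijOn_compress hA).image_eq, (S.bijOn_compress hA).injOn.encard_image]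

variable {S} in
theorem IsLower.rearrangeSet_eq (h : S.IsLower A) (hA : A.Finite) : S.rearrangeSet A = A := by
  suffices hsub : A ⊆ S.rearrangeSet A from
    (hA.eq_of_subset_of_encard_le hsub (S.encard_rearrangeSet hA).le).symm
  intro x hx
  have hsub : Set.Iic (S.rank x) ⊆ {n | S.pointOfRank x n ∈ A} := fun n hn => by
    rcases (Set.mem_Iic.mp hn).lt_or_eq with hlt | rfl
    · exact h S.rel_pointOfRank (S.rank_pointOfRank.trans_lt hlt) hx
    · rwa [Set.mem_ofPred_eq, pointOfRank_rank (S.iseqv.refl x)]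
  change (S.rank x : ℕ∞) < _
  rw [S.encard_class_inter]
  calc (S.rank x : ℕ∞) < (S.rank x + 1 : ℕ) := by exact_mod_cast Nat.lt_succ_self _
    _ = (Set.Iic (S.rank x)).encard := by
      rw [← Finset.coe_Iic, Set.encard_coe_eq_coe_finsetCard, Nat.card_Iic]
    _ ≤ _ := Set.encard_le_encard hsub

theorem encard_inter_le_rearrangeSet (hA : A.Finite) :
    (A ∩ B).encard ≤ (S.rearrangeSet A ∩ S.rearrangeSet B).encard := by
  rw [← S.encard_rearrangeSet (hA.inter_of_left B)]
  exact Set.encard_le_encard (Set.subset_inter (S.rearrangeSet_mono Set.inter_subset_left)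
    (S.rearrangeSet_mono Set.inter_subset_right))

section Potential

variable {φ : X → ℕ} {S}

theorem IsPotential.compress_le (hφ : S.IsPotential φ) : φ (S.compress A x) ≤ φ x := by
  rcases S.rank_compress_le.lt_or_eq with hlt | heq
  · exact (hφ (S.iseqv.symm S.rel_compress) hlt).le
  · rw [← eq_of_rel_of_rank_eq S.rel_compress heq.symm]

theorem IsPotential.compress_eq_self (hφ : S.IsPotential φ) (h : φ (S.compress A x) = φ x) :
    S.compress A x = x := by
  rcases S.rank_compress_le.lt_or_eq with hlt | heq
  · exact absurd h (hφ (S.iseqv.symm S.rel_compress) hlt).ne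
  · exact (eq_of_rel_of_rank_eq S.rel_compress heq.symm).symm

theorem finsum_rearrangeSet_eq (hA : A.Finite) (φ : X → ℕ) :
    ∑ᶠ x ∈ S.rearrangeSet A, φ x = ∑ᶠ x ∈ A, φ (S.compress A x) :=
  (finsum_mem_eq_of_bijOn _ (S.bijOn_compress hA) fun _ _ => rfl).symm

theorem IsPotential.finsum_rearrangeSet_le (hφ : S.IsPotential φ) (hA : A.Finite) :
    ∑ᶠ x ∈ S.rearrangeSet A, φ x ≤ ∑ᶠ x ∈ A, φ x := by
  rw [finsum_rearrangeSet_eq hA]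
  lift A to Finset X using hA
  rw [finsum_mem_coe_finset, finsum_mem_coe_finset]
  exact Finset.sum_le_sum fun _ _ => hφ.compress_le

theorem IsPotential.rearrangeSet_eq_of_finsum_eq (hφ : S.IsPotential φ) (hA : A.Finite)
    (h : ∑ᶠ x ∈ S.rearrangeSet A, φ x = ∑ᶠ x ∈ A, φ x) : S.rearrangeSet A = A := by
  rw [finsum_rearrangeSet_eq hA] at h
  rw [← (S.bijOn_compress hA).image_eq]
  refine Set.EqOn.image_eq_self fun x hx => hφ.compress_eq_self ?_
  lift A to Finset X using hA
  rw [finsum_mem_coe_finset, finsum_mem_coe_finset] at h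
  exact (Finset.sum_eq_sum_iff_of_le fun _ _ => hφ.compress_le).mp h x hx

end Potential

/-! ### Rearrangement of functions -/

section Function

variable {u v : X → ℝ≥0} {t : ℝ≥0}

theorem lt_rearrange_iff (hu : BddAbove (Set.range u)) :
    t < S.rearrange u x ↔ x ∈ S.rearrangeSet {y | t < u y} := by
  have hclass : {y : {y // S.r x y} | t < u y}.encard = {y | S.r x y ∧ t < u y}.encard := by
    rw [← Subtype.val_injective.encard_image]
    congr 1
    ext y
    simp [and_comm]
  have hbdd : BddAbove (Set.range fun y : {y // S.r x y} => u y) :=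
    hu.mono (Set.range_comp_subset_range _ u)
  rw [rearrange, lt_nthLargest_add_one_iff hbdd, hclass]
  rfl

theorem superlevel_rearrange (hu : BddAbove (Set.range u)) :
    {x | t < S.rearrange u x} = S.rearrangeSet {x | t < u x} :=
  Set.ext fun _ => S.lt_rearrange_iff hu

theorem admissible_rearrange (hu : Admissible u) : Admissible (S.rearrange u) := fun t ht => by
  rw [S.superlevel_rearrange hu.bddAbove_range]
  exact S.finite_rearrangeSet (hu t ht)

theorem rearrange_eq_self_iff (hu : Admissible u) :
    S.rearrange u = u ↔ ∀ t, 0 < t → S.IsLower {x | t < u x} := by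
  constructor
  · intro h t _
    rw [← h, S.superlevel_rearrange hu.bddAbove_range]
    exact S.isLower_rearrangeSet _
  · intro h
    refine eq_of_superlevel_eq fun t ht => ?_
    rw [S.superlevel_rearrange hu.bddAbove_range, (h t ht).rearrangeSet_eq (hu t ht)]

theorem le_of_rearrange_eq_self (hu : Admissible u) (hSu : S.rearrange u = u) (hxy : S.r x y)
    (hrank : S.rank y < S.rank x) : u x ≤ u y := by
  refine le_of_forall_lt fun s hs => ?_
  obtain ⟨t, hst, ht⟩ := exists_between hs
  exact hst.trans ((S.rearrange_eq_self_iff hu).mp hSu t (pos_of_gt hst) hxy hrank ht)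

theorem rearrange_comp_perm (u : X → ℝ≥0) (e : Equiv.Perm X) (he : ∀ x, S.r x (e x)) :
    S.rearrange (u ∘ e) = S.rearrange u := by
  funext x
  have hclass (y : X) : S.r x (e y) ↔ S.r x y :=
    ⟨fun h => S.iseqv.trans h (S.iseqv.symm (he y)), fun h => S.iseqv.trans h (he y)⟩
  exact nthLargest_comp_equiv (u := fun y : {y // S.r x y} => u y) (e.subtypePerm hclass) _

theorem rel_swap_apply [DecidableEq X] {a b : X} (hab : S.r a b) (x : X) :
    S.r x (Equiv.swap a b x) := by
  rcases eq_or_ne x a with rfl | hxa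
  · rwa [Equiv.swap_apply_left]
  rcases eq_or_ne x b with rfl | hxb
  · rw [Equiv.swap_apply_right]
    exact S.iseqv.symm hab
  · rw [Equiv.swap_apply_of_ne_of_ne hxa hxb]

end Function

end RankedPartition

/-! ### Sums of products -/

section TsumMul

open MeasureTheory Set

variable {α : Type*} {u v u' v' : α → ℝ≥0}

theorem tsum_mul_eq_lintegral_encard [Countable α] (u v : α → ℝ≥0) :
    ∑' x, ((u x * v x : ℝ≥0) : ℝ≥0∞) = ∫⁻ p : ℝ × ℝ in Ioi 0 ×ˢ Ioi 0,
      (({x | p.1 < u x} ∩ {x | p.2 < v x} : Set α).encard : ℝ≥0∞) := by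
  have count (p : ℝ × ℝ) : (({x | p.1 < u x} ∩ {x | p.2 < v x} : Set α).encard : ℝ≥0∞) =
      ∑' x, (Iio (u x : ℝ) ×ˢ Iio (v x : ℝ)).indicator 1 p := by
    rw [← ENNReal.tsum_set_one, tsum_subtype _ fun _ => 1]
    rfl
  have measurable (x : α) : MeasurableSet (Iio (u x : ℝ) ×ˢ Iio (v x : ℝ)) :=
    measurableSet_Iio.prod measurableSet_Iio
  have area (x : α) : volume.restrict (Ioi (0 : ℝ) ×ˢ Ioi (0 : ℝ))
      (Iio (u x : ℝ) ×ˢ Iio (v x : ℝ)) = ((u x * v x : ℝ≥0) : ℝ≥0∞) := by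
    rw [Measure.restrict_apply (measurable x), prod_inter_prod, Measure.volume_eq_prod,
      Measure.prod_prod, Iio_inter_Ioi, Iio_inter_Ioi, Real.volume_Ioo, Real.volume_Ioo]
    simp
  simp only [count]
  rw [lintegral_tsum fun x => (measurable_one.indicator (measurable x)).aemeasurable]
  simp only [lintegral_indicator_one (measurable _), area]

theorem tsum_mul_le_tsum_mul [Countable α]
    (h : ∀ s t : ℝ≥0, 0 < s → 0 < t →
      ({x | s < u x} ∩ {x | t < v x}).encard ≤ ({x | s < u' x} ∩ {x | t < v' x}).encard) :
    ∑' x, ((u x * v x : ℝ≥0) : ℝ≥0∞) ≤ ∑' x, ((u' x * v' x : ℝ≥0) : ℝ≥0∞) := by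
  rw [tsum_mul_eq_lintegral_encard, tsum_mul_eq_lintegral_encard]
  refine setLIntegral_mono' (measurableSet_Ioi.prod measurableSet_Ioi) fun p hp => ?_
  exact ENat.toENNReal_le.mpr
    (h ⟨p.1, (mem_Ioi.mp hp.1).le⟩ ⟨p.2, (mem_Ioi.mp hp.2).le⟩ hp.1 hp.2)

theorem tsum_mul_lt_tsum_mul_swap [DecidableEq α] {a b : α} (hu : u a < u b) (hv : v b < v a)
    (hfin : ∑' x, ((u x * v x : ℝ≥0) : ℝ≥0∞) ≠ ⊤) :
    ∑' x, ((u x * v x : ℝ≥0) : ℝ≥0∞) <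
      ∑' x, ((u x * (v ∘ Equiv.swap a b) x : ℝ≥0) : ℝ≥0∞) := by
  have hne : a ≠ b := by
    rintro rfl
    exact lt_irrefl _ hu
  have hrest : ∑' x : ↥(({a, b} : Finset α) : Set α)ᶜ, ((u x * v x : ℝ≥0) : ℝ≥0∞) =
      ∑' x : ↥(({a, b} : Finset α) : Set α)ᶜ,
        ((u x * (v ∘ Equiv.swap a b) x : ℝ≥0) : ℝ≥0∞) :=
    tsum_congr fun ⟨x, hx⟩ => by
      simp only [Finset.coe_insert, Finset.coe_singleton, mem_compl_iff, mem_insert_iff,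
        mem_singleton_iff, not_or] at hx
      rw [Function.comp_apply, Equiv.swap_apply_of_ne_of_ne hx.1 hx.2]
  rw [← ENNReal.sum_add_tsum_compl {a, b}] at hfin ⊢
  rw [← ENNReal.sum_add_tsum_compl {a, b} fun x => ((u x * (v ∘ Equiv.swap a b) x : ℝ≥0) : ℝ≥0∞),
    ← hrest, Finset.sum_pair hne, Finset.sum_pair hne]
  refine ENNReal.add_lt_add_right (ENNReal.add_ne_top.mp hfin).2 ?_
  simp only [Function.comp_apply, Equiv.swap_apply_left, Equiv.swap_apply_right]
  exact_mod_cast mul_add_mul_lt_mul_add_mul hu hv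

end TsumMul

namespace RankedPartition

section Step

variable {X : Type*} {u v : X → ℝ≥0} {S : RankedPartition X}

theorem tsum_mul_le_tsum_rearrange_mul [Countable X] (hu : Admissible u) (hv : Admissible v) :
    ∑' x, ((u x * v x : ℝ≥0) : ℝ≥0∞) ≤
      ∑' x, ((S.rearrange u x * S.rearrange v x : ℝ≥0) : ℝ≥0∞) :=
  tsum_mul_le_tsum_mul fun s t hs _ => by
    rw [S.superlevel_rearrange hu.bddAbove_range, S.superlevel_rearrange hv.bddAbove_range]
    exact S.encard_inter_le_rearrangeSet (hu s hs)

/-- An inverted pair of values of `v` in a class could be swapped, which would increase the sum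
without changing the rearrangement of `v`. -/
theorem rearrange_eq_self_of_tsum_mul_le [Countable X] (hu : Admissible u) (hv : Admissible v)
    (hinj : Function.Injective u) (hSu : S.rearrange u = u)
    (hfin : ∑' x, ((u x * v x : ℝ≥0) : ℝ≥0∞) ≠ ⊤)
    (hle : ∑' x, ((u x * S.rearrange v x : ℝ≥0) : ℝ≥0∞) ≤ ∑' x, ((u x * v x : ℝ≥0) : ℝ≥0∞)) :
    S.rearrange v = v := by
  classical
  rw [S.rearrange_eq_self_iff hv]
  rintro t - a b hab hrank ha
  by_contra hb
  have hvab : v b < v a := (not_lt.mp hb).trans_lt ha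
  have huab : u a < u b := by
    refine (S.le_of_rearrange_eq_self hu hSu hab hrank).lt_of_ne (hinj.ne ?_)
    rintro rfl
    exact lt_irrefl _ hrank
  have key := calc
    ∑' x, ((u x * v x : ℝ≥0) : ℝ≥0∞)
      < ∑' x, ((u x * (v ∘ Equiv.swap a b) x : ℝ≥0) : ℝ≥0∞) :=
        tsum_mul_lt_tsum_mul_swap huab hvab hfin
    _ ≤ ∑' x, ((S.rearrange u x * S.rearrange (v ∘ Equiv.swap a b) x : ℝ≥0) : ℝ≥0∞) :=
        tsum_mul_le_tsum_rearrange_mul hu (hv.comp_injective (Equiv.injective _))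
    _ = ∑' x, ((u x * S.rearrange v x : ℝ≥0) : ℝ≥0∞) := by
        rw [hSu, S.rearrange_comp_perm v _ (S.rel_swap_apply hab)]
  exact hle.not_gt key

end Step

end RankedPartition

/-! ### Iterated rearrangement -/

/-- Convergence of functions on a discrete space in which every superlevel set eventually becomes
that of the limit. -/
def TendstoLevelwise {X : Type*} (f : ℕ → X → ℝ≥0) (g : X → ℝ≥0) : Prop :=
  ∀ t : ℝ≥0, 0 < t → ∀ᶠ k in atTop, {x | t < f k x} = {x | t < g x}

namespace RankedPartition

section Iterate

variable {X : Type*}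

/-- The `k`-fold rearrangement of a function along the partitions `σ 0, …, σ (k - 1)`. -/
def iterRearrange (σ : ℕ → RankedPartition X) (u : X → ℝ≥0) : ℕ → X → ℝ≥0
  | 0 => u
  | k + 1 => (σ k).rearrange (iterRearrange σ u k)

/-- The `k`-fold rearrangement of a set along the partitions `σ 0, …, σ (k - 1)`. -/
def iterRearrangeSet (σ : ℕ → RankedPartition X) (A : Set X) : ℕ → Set X
  | 0 => A
  | k + 1 => (σ k).rearrangeSet (iterRearrangeSet σ A k)

variable {σ : ℕ → RankedPartition X} {φ : X → ℕ} {A B : Set X} {u v u' v' : X → ℝ≥0} {t : ℝ≥0}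
  {k : ℕ}

theorem finite_iterRearrangeSet (hA : A.Finite) : (iterRearrangeSet σ A k).Finite := by
  induction k with
  | zero => exact hA
  | succ k ih => exact (σ k).finite_rearrangeSet ih

theorem admissible_iterRearrange (hu : Admissible u) : Admissible (iterRearrange σ u k) := by
  induction k with
  | zero => exact hu
  | succ k ih => exact (σ k).admissible_rearrange ih

theorem superlevel_iterRearrange (hu : Admissible u) :
    {x | t < iterRearrange σ u k x} = iterRearrangeSet σ {x | t < u x} k := by
  induction k with
  | zero => rfl
  | succ k ih =>
    have hbdd := (admissible_iterRearrange (σ := σ) (k := k) hu).bddAbove_range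
    exact ((σ k).superlevel_rearrange hbdd).trans (congrArg _ ih)

theorem iterRearrange_le {M : ℝ≥0} (hu : Admissible u) (hM : ∀ x, u x ≤ M) (x : X) :
    iterRearrange σ u k x ≤ M := by
  have hempty (k : ℕ) : iterRearrangeSet σ (∅ : Set X) k = ∅ := by
    induction k with
    | zero => rfl
    | succ k ih =>
      rw [iterRearrangeSet, ih]
      exact IsLower.rearrangeSet_eq (fun _ _ _ _ => False.elim) Set.finite_empty
  have hsup := superlevel_iterRearrange (σ := σ) (t := M) (k := k) hu
  have hM_empty : {x | M < u x} = ∅ :=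
    Set.eq_empty_of_forall_notMem fun x hx => (hM x).not_gt hx
  rw [hM_empty, hempty] at hsup
  exact not_lt.mp (Set.eq_empty_iff_forall_notMem.mp hsup x)

theorem monotone_encard_iterRearrangeSet_inter (hA : A.Finite) :
    Monotone fun k => (iterRearrangeSet σ A k ∩ iterRearrangeSet σ B k).encard :=
  monotone_nat_of_le_succ fun k =>
    (σ k).encard_inter_le_rearrangeSet (finite_iterRearrangeSet hA)

theorem antitone_finsum_iterRearrangeSet (hφ : ∀ k, (σ k).IsPotential φ) (hA : A.Finite) :
    Antitone fun k => ∑ᶠ x ∈ iterRearrangeSet σ A k, φ x :=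
  antitone_nat_of_succ_le fun k => (hφ k).finsum_rearrangeSet_le (finite_iterRearrangeSet hA)

theorem eventuallyConst_iterRearrangeSet (hφ : ∀ k, (σ k).IsPotential φ) (hA : A.Finite) :
    EventuallyConst (iterRearrangeSet σ A) atTop := by
  obtain ⟨n, hn⟩ :=
    WellFoundedLT.antitone_chain_condition (antitone_finsum_iterRearrangeSet hφ hA)
  refine eventuallyConst_atTop_nat.mpr ⟨n, fun m hm => ?_⟩
  exact (hφ m).rearrangeSet_eq_of_finsum_eq (finite_iterRearrangeSet hA)
    ((hn (m + 1) (by omega)).symm.trans (hn m hm))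

theorem iterRearrangeSet_eq_self (hφ : ∀ k, (σ k).IsPotential φ) (hA : A.Finite)
    (h : ∃ᶠ n in atTop, iterRearrangeSet σ A n = A) : iterRearrangeSet σ A k = A := by
  have hanti := antitone_finsum_iterRearrangeSet hφ hA
  have hsum (k : ℕ) : ∑ᶠ x ∈ iterRearrangeSet σ A k, φ x = ∑ᶠ x ∈ A, φ x := by
    obtain ⟨n, hn, hkn⟩ := (h.and_eventually (eventually_ge_atTop k)).exists
    refine le_antisymm (hanti k.zero_le) ?_
    simpa only [hn] using hanti hkn
  induction k with
  | zero => rfl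
  | succ k ih =>
    refine ((hφ k).rearrangeSet_eq_of_finsum_eq (finite_iterRearrangeSet hA) ?_).trans ih
    exact (hsum (k + 1)).trans (hsum k).symm

theorem iterRearrange_eq_self_of_tendstoLevelwise (hφ : ∀ k, (σ k).IsPotential φ)
    (hu : Admissible u) (h : TendstoLevelwise (iterRearrange σ u) u) (k : ℕ) :
    iterRearrange σ u k = u := by
  refine eq_of_superlevel_eq fun t ht => ?_
  rw [superlevel_iterRearrange hu]
  refine iterRearrangeSet_eq_self hφ (hu t ht) (Eventually.frequently ?_)
  simpa only [superlevel_iterRearrange hu] using h t ht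

theorem rearrange_eq_self_of_tendstoLevelwise (hφ : ∀ k, (σ k).IsPotential φ)
    (hu : Admissible u) (h : TendstoLevelwise (iterRearrange σ u) u) (k : ℕ) :
    (σ k).rearrange u = u := by
  conv_lhs => rw [← iterRearrange_eq_self_of_tendstoLevelwise hφ hu h k]
  exact iterRearrange_eq_self_of_tendstoLevelwise hφ hu h (k + 1)

theorem exists_tendsto_iterRearrange (hφ : ∀ k, (σ k).IsPotential φ) (hu : Admissible u)
    (x : X) : ∃ l, Tendsto (fun k => iterRearrange σ u k x) atTop (𝓝 l) := by
  obtain ⟨M, hM⟩ := hu.bddAbove_range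
  refine tendsto_of_no_upcrossings dense_univ ?_
    ⟨M, eventually_map.mpr (.of_forall fun k =>
      iterRearrange_le hu (Set.forall_mem_range.mp hM) x)⟩
  rintro a - b - hab ⟨hlt, hgt⟩
  obtain ⟨t, hat, htb⟩ := exists_between hab
  have hconst := (eventuallyConst_iterRearrangeSet hφ (hu t (pos_of_gt hat))).comp (x ∈ ·)
  simp only [Function.comp_def, ← superlevel_iterRearrange hu] at hconst
  rcases eventuallyConst_pred.mp hconst with habove | hbelow
  · obtain ⟨k, hk, htk⟩ := (hlt.and_eventually habove).exists
    exact lt_asymm hat (htk.trans hk)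
  · obtain ⟨k, hk, htk⟩ := (hgt.and_eventually hbelow).exists
    exact htk (htb.trans hk)

theorem tendstoLevelwise_of_tendsto (hφ : ∀ k, (σ k).IsPotential φ) (hu : Admissible u)
    (h : ∀ x, Tendsto (fun k => iterRearrange σ u k x) atTop (𝓝 (u' x))) :
    TendstoLevelwise (iterRearrange σ u) u' := by
  intro t ht
  obtain ⟨s, hts, hs⟩ := hu.exists_gt_superlevel_eq ht
  obtain ⟨L, hL⟩ := eventuallyConst_iff_exists_eventuallyEq.mp
    (eventuallyConst_iterRearrangeSet hφ (hu t ht))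
  have lt_of_mem {x : X} (hx : x ∈ L) : t < u' x := by
    refine hts.trans_le (ge_of_tendsto (h x) (hL.mono fun k hk => ?_))
    rw [← hs, ← superlevel_iterRearrange hu] at hk
    exact (hk.symm ▸ hx : x ∈ {x | s < iterRearrange σ u k x}).le
  have le_of_notMem {x : X} (hx : x ∉ L) : u' x ≤ t := by
    refine le_of_tendsto (h x) (hL.mono fun k hk => ?_)
    rw [← superlevel_iterRearrange hu] at hk
    exact not_lt.mp (hk.symm ▸ hx : x ∉ {x | t < iterRearrange σ u k x})
  filter_upwards [hL] with k hk
  rw [superlevel_iterRearrange hu, hk]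
  ext x
  exact ⟨lt_of_mem, fun hx => not_imp_comm.mp le_of_notMem hx.not_ge⟩

theorem tsum_iterRearrange_mul_le [Countable X] (hu : Admissible u) (hv : Admissible v)
    (hu' : TendstoLevelwise (iterRearrange σ u) u')
    (hv' : TendstoLevelwise (iterRearrange σ v) v') (k : ℕ) :
    ∑' x, ((iterRearrange σ u k x * iterRearrange σ v k x : ℝ≥0) : ℝ≥0∞) ≤
      ∑' x, ((u' x * v' x : ℝ≥0) : ℝ≥0∞) := by
  refine tsum_mul_le_tsum_mul fun s t hs ht => ?_
  obtain ⟨n, ⟨hun, hvn⟩, hkn⟩ :=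
    (((hu' s hs).and (hv' t ht)).and (eventually_ge_atTop k)).exists
  rw [← hun, ← hvn]
  simp only [superlevel_iterRearrange hu, superlevel_iterRearrange hv]
  exact monotone_encard_iterRearrangeSet_inter (hu s hs) hkn

/-- Every single step must preserve the sum, hence fixes `v`. -/
theorem eq_of_tsum_mul_eq [Countable X] (hφ : ∀ k, (σ k).IsPotential φ) (hu : Admissible u)
    (hv : Admissible v) (hu' : TendstoLevelwise (iterRearrange σ u) u)
    (hv' : TendstoLevelwise (iterRearrange σ v) v') (hinj : Function.Injective u)
    (hfin : ∑' x, ((u x * v' x : ℝ≥0) : ℝ≥0∞) ≠ ⊤)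
    (heq : ∑' x, ((u x * v x : ℝ≥0) : ℝ≥0∞) = ∑' x, ((u x * v' x : ℝ≥0) : ℝ≥0∞)) :
    v = v' := by
  have hiter (k : ℕ) : iterRearrange σ v k = v := by
    induction k with
    | zero => rfl
    | succ k ih =>
      have hle := tsum_iterRearrange_mul_le hu hv hu' hv' (k + 1)
      rw [iterRearrange_eq_self_of_tendstoLevelwise hφ hu hu', iterRearrange, ih, ← heq] at hle
      rw [iterRearrange, ih]
      exact rearrange_eq_self_of_tsum_mul_le hu hv hinj
        (rearrange_eq_self_of_tendstoLevelwise hφ hu hu' k) (heq ▸ hfin) hle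
  refine eq_of_superlevel_eq fun t ht => ?_
  obtain ⟨k, hk⟩ := (hv' t ht).exists
  rwa [hiter] at hk

end Iterate

end RankedPartition

/-! ### The directions as half-coroots -/

section Root

open Matrix

variable {d : ℕ} {v x y : ZLat d} {c : ℤ}

/-- The positive roots `e_i` and `e_i ± e_j`, `i < j`, of the root system `B_d`. -/
inductive IsPositiveRoot : ZLat d → Prop
  | single (i : Fin d) : IsPositiveRoot (Pi.single i 1)
  | add {i j : Fin d} (hij : i < j) : IsPositiveRoot (Pi.single i 1 + Pi.single j 1)
  | sub {i j : Fin d} (hij : i < j) : IsPositiveRoot (Pi.single i 1 - Pi.single j 1)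

/-- Half of the coroot `2v / ⟨v, v⟩`; the directions in `E⃗` are the half-coroots of the positive
roots. -/
def halfCoroot (v : ZLat d) : Fin d → ℝ := fun k => v k / (v ⬝ᵥ v : ℤ)

/-- The sum `(d, d - 1, …, 1)` of the fundamental coweights of `B_d`; scaled by `1 / (2 * (d + 1))`,
it is the point of the fundamental alcove to which distances are measured. -/
def alcoveVec (d : ℕ) : ZLat d := fun k => d - k

theorem IsPositiveRoot.dotProduct_self_dvd_two (hv : IsPositiveRoot v) : v ⬝ᵥ v ∣ 2 := by
  rcases hv with i | ⟨hij⟩ | ⟨hij⟩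
  · simp
  · simp [hij.ne, hij.ne']
  · simp [hij.ne, hij.ne']

theorem IsPositiveRoot.dotProduct_self_pos (hv : IsPositiveRoot v) : 0 < v ⬝ᵥ v := by
  rcases hv with i | ⟨hij⟩ | ⟨hij⟩
  · simp
  · simp [hij.ne, hij.ne']
  · simp [hij.ne, hij.ne']

theorem IsPositiveRoot.exists_apply_eq_one (hv : IsPositiveRoot v) : ∃ i, v i = 1 := by
  rcases hv with i | @⟨i, j, hij⟩ | @⟨i, j, hij⟩
  · exact ⟨i, by simp⟩
  · exact ⟨i, by simp [hij.ne']⟩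
  · exact ⟨i, by simp [hij.ne]⟩

theorem IsPositiveRoot.alcoveVec_dotProduct_pos (hv : IsPositiveRoot v) :
    0 < alcoveVec d ⬝ᵥ v := by
  rcases hv with i | @⟨i, j, hij⟩ | @⟨i, j, hij⟩
  · simp [alcoveVec]
  · simp only [alcoveVec, dotProduct_add, dotProduct_single_one]
    omega
  · simp only [alcoveVec, dotProduct_sub, dotProduct_single_one]
    omega

theorem IsPositiveRoot.alcoveVec_dotProduct_lt (hv : IsPositiveRoot v) :
    alcoveVec d ⬝ᵥ v < (d + 1) * (v ⬝ᵥ v) := by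
  rcases hv with i | @⟨i, j, hij⟩ | @⟨i, j, hij⟩
  · simp [alcoveVec]
  · simp only [alcoveVec, dotProduct_add, dotProduct_single_one, Pi.add_apply,
      Pi.single_eq_same, Pi.single_eq_of_ne hij.ne, Pi.single_eq_of_ne hij.ne']
    omega
  · simp only [alcoveVec, dotProduct_sub, dotProduct_single_one, Pi.sub_apply,
      Pi.single_eq_same, Pi.single_eq_of_ne hij.ne, Pi.single_eq_of_ne hij.ne']
    omega

theorem mem_evecList_iff {e : Fin d → ℝ} :
    e ∈ EvecList d ↔ ∃ v, IsPositiveRoot v ∧ halfCoroot v = e := by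
  have single (i : Fin d) : halfCoroot (Pi.single i 1) = stdVec d i := by
    funext k
    simp [halfCoroot, stdVec, Pi.single_apply]
  have add {i j : Fin d} (hij : i < j) : halfCoroot (Pi.single i 1 + Pi.single j 1) =
      fun k => (stdVec d i k + stdVec d j k) / 2 := by
    funext k
    simp [halfCoroot, stdVec, Pi.single_apply, hij.ne, hij.ne', one_add_one_eq_two]
  have sub {i j : Fin d} (hij : i < j) : halfCoroot (Pi.single i 1 - Pi.single j 1) =
      fun k => (stdVec d i k - stdVec d j k) / 2 := by
    funext k
    simp [halfCoroot, stdVec, Pi.single_apply, hij.ne, hij.ne', one_add_one_eq_two]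
  simp only [EvecList, List.mem_append, List.mem_map, List.mem_flatMap, List.mem_filterMap,
    List.mem_finRange, true_and, Option.ite_none_right_eq_some, Option.some.injEq]
  constructor
  · rintro ((⟨i, rfl⟩ | ⟨i, j, hij, rfl⟩) | ⟨i, j, hij, rfl⟩)
    · exact ⟨_, .single i, single i⟩
    · exact ⟨_, .add hij, add hij⟩
    · exact ⟨_, .sub hij, sub hij⟩
  · rintro ⟨v, i | @⟨i, j, hij⟩ | @⟨i, j, hij⟩, rfl⟩
    · exact .inl (.inl ⟨i, (single i).symm⟩)
    · exact .inl (.inr ⟨i, j, hij, (add hij).symm⟩)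
    · exact .inr ⟨i, j, hij, (sub hij).symm⟩

theorem pairing_halfCoroot_mul (hv : v ⬝ᵥ v ∣ 2) :
    pairing (halfCoroot v) x * (v ⬝ᵥ v) = 2 * (v ⬝ᵥ x) := by
  obtain ⟨m, hm⟩ := hv
  have hne : ((v ⬝ᵥ v : ℤ) : ℝ) ≠ 0 := by
    intro h
    rw [Int.cast_eq_zero.mp h, zero_mul] at hm
    exact two_ne_zero hm
  have hsum : 2 * ∑ i, halfCoroot v i * (x i : ℝ) = (m * (v ⬝ᵥ x) : ℤ) := by
    have hm' : (2 : ℝ) = (v ⬝ᵥ v : ℤ) * m := by exact_mod_cast hm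
    simp only [halfCoroot, div_mul_eq_mul_div, ← Finset.sum_div]
    have hdot : ∑ i, (v i : ℝ) * x i = (v ⬝ᵥ x : ℤ) := by simp [dotProduct]
    rw [hm', Int.cast_mul, hdot]
    field_simp
  rw [pairing, hsum, Int.floor_intCast, hm]
  ring

theorem pairing_halfCoroot_add_smul (hv : v ⬝ᵥ v ∣ 2) :
    pairing (halfCoroot v) (x + c • v) = pairing (halfCoroot v) x + 2 * c := by
  have hne : v ⬝ᵥ v ≠ 0 := fun h => two_ne_zero (zero_dvd_iff.mp (h ▸ hv))
  apply mul_right_cancel₀ hne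
  rw [pairing_halfCoroot_mul hv, add_mul, pairing_halfCoroot_mul hv, dotProduct_add,
    dotProduct_smul, smul_eq_mul]
  ring

theorem sameLine_halfCoroot_iff (hv : IsPositiveRoot v) :
    sameLine (halfCoroot v) x y ↔ ∃ c : ℤ, y = x + c • v := by
  have hne : ((v ⬝ᵥ v : ℤ) : ℝ) ≠ 0 := Int.cast_ne_zero.mpr hv.dotProduct_self_pos.ne'
  constructor
  · rintro ⟨c, hc⟩
    obtain ⟨i, hi⟩ := hv.exists_apply_eq_one
    have hck (k : Fin d) : ((x k : ℝ) - y k) = c * (v k / (v ⬝ᵥ v : ℤ)) := congrFun hc k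
    have hdiff (k : Fin d) : ((x k - y k : ℤ) : ℝ) = ((x i - y i) * v k : ℤ) := by
      push_cast
      rw [hck k, hck i, hi]
      push_cast
      ring
    refine ⟨y i - x i, funext fun k => ?_⟩
    have := Int.cast_injective (hdiff k)
    simp only [Pi.add_apply, Pi.smul_apply, smul_eq_mul]
    linarith
  · rintro ⟨c, rfl⟩
    refine ⟨-c * (v ⬝ᵥ v : ℤ), funext fun k => ?_⟩
    simp only [halfCoroot, Pi.add_apply, Pi.smul_apply, smul_eq_mul, Int.cast_add, Int.cast_mul]
    field_simp
    ring

end Root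

section PosIdx

variable {c m : ℤ}

theorem posIdx_pos : 0 < posIdx m := by
  unfold posIdx
  split_ifs <;> omega

theorem bijective_posIdx_add_two_mul (m : ℤ) :
    Function.Bijective fun c : ℤ => posIdx (m + 2 * c) - 1 := by
  constructor
  · intro a b hab
    simp only [posIdx] at hab
    split_ifs at hab <;> omega
  · intro n
    rcases Int.emod_two_eq_zero_or_one (n + 1 - m) with h | h
    · refine ⟨(n + 1 - m) / 2, ?_⟩
      simp only [posIdx]
      split_ifs <;> omega
    · refine ⟨(-n - m) / 2, ?_⟩
      simp only [posIdx]
      split_ifs <;> omega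

theorem posIdx_lt_posIdx_add_two_mul (h : posIdx m < posIdx (m + 2 * c)) :
    0 < c ∧ 0 < m + c ∨ c < 0 ∧ m + c ≤ 0 := by
  unfold posIdx at h
  split_ifs at h <;> omega

end PosIdx

/-! ### The rearrangements along the directions -/

section Lattice

open Matrix RankedPartition

variable {d : ℕ} {v x y : ZLat d} {u : ZLat d → ℝ≥0} {A : Set (ZLat d)}

theorem equivalence_sameLine_halfCoroot (hv : IsPositiveRoot v) :
    Equivalence (sameLine (halfCoroot v)) := by
  refine ⟨fun x => ?_, fun {x y} hxy => ?_, fun {x y z} hxy hyz => ?_⟩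
  · exact (sameLine_halfCoroot_iff hv).mpr ⟨0, by simp⟩
  · obtain ⟨c, rfl⟩ := (sameLine_halfCoroot_iff hv).mp hxy
    exact (sameLine_halfCoroot_iff hv).mpr ⟨-c, by simp⟩
  · obtain ⟨b, rfl⟩ := (sameLine_halfCoroot_iff hv).mp hxy
    obtain ⟨c, rfl⟩ := (sameLine_halfCoroot_iff hv).mp hyz
    exact (sameLine_halfCoroot_iff hv).mpr ⟨b + c, by rw [add_smul, add_assoc]⟩

theorem bijective_posIdx_pairing_halfCoroot (hv : IsPositiveRoot v) (x : ZLat d) :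
    Function.Bijective fun y : {y // sameLine (halfCoroot v) x y} =>
      posIdx (pairing (halfCoroot v) y.1) - 1 := by
  let rank (y : {y // sameLine (halfCoroot v) x y}) : ℕ :=
    posIdx (pairing (halfCoroot v) y.1) - 1
  let point (c : ℤ) : {y // sameLine (halfCoroot v) x y} :=
    ⟨x + c • v, (sameLine_halfCoroot_iff hv).mpr ⟨c, rfl⟩⟩
  have point_surjective : Function.Surjective point := fun ⟨y, hy⟩ => by
    obtain ⟨c, rfl⟩ := (sameLine_halfCoroot_iff hv).mp hy
    exact ⟨c, rfl⟩
  have hcomp : rank ∘ point = fun c => posIdx (pairing (halfCoroot v) x + 2 * c) - 1 :=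
    funext fun c => by
      simp only [Function.comp_apply, rank, point,
        pairing_halfCoroot_add_smul hv.dotProduct_self_dvd_two]
  have hbij : Function.Bijective (rank ∘ point) := hcomp ▸ bijective_posIdx_add_two_mul _
  exact (Function.Bijective.of_comp_iff rank ⟨hbij.injective.of_comp, point_surjective⟩).mp hbij

/-- The partition of `ℤ^d` into the lines parallel to the positive root `v`, ranked by the spiral
order of the pairings with its half-coroot. -/
def rootPartition (hv : IsPositiveRoot v) : RankedPartition (ZLat d) where
  r := sameLine (halfCoroot v)
  iseqv := equivalence_sameLine_halfCoroot hv
  rank x := posIdx (pairing (halfCoroot v) x) - 1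
  bijective_rank := bijective_posIdx_pairing_halfCoroot hv

theorem rearrange_rootPartition (hv : IsPositiveRoot v) :
    (rootPartition hv).rearrange u = stepR (halfCoroot v) u :=
  funext fun _ => congrArg (nthLargest _) (Nat.sub_add_cancel posIdx_pos)

theorem rank_rootPartition_lt_iff (hv : IsPositiveRoot v) :
    (rootPartition hv).rank x < (rootPartition hv).rank y ↔
      posIdx (pairing (halfCoroot v) x) < posIdx (pairing (halfCoroot v) y) :=
  Nat.sub_lt_sub_iff_right posIdx_pos

/-- Up to scaling and an additive constant, the squared distance of `x` to the point
`alcoveVec d / (2 * (d + 1))` of the fundamental alcove. -/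
def alcovePotential (d : ℕ) (x : ZLat d) : ℕ := ((d + 1) * (x ⬝ᵥ x) - alcoveVec d ⬝ᵥ x).toNat

theorem alcovePotential_cast (x : ZLat d) :
    (alcovePotential d x : ℤ) = (d + 1) * (x ⬝ᵥ x) - alcoveVec d ⬝ᵥ x := by
  refine Int.toNat_of_nonneg (sub_nonneg.mpr ?_)
  rw [dotProduct, dotProduct, Finset.mul_sum]
  refine Finset.sum_le_sum fun k _ => ?_
  have hk : 0 < alcoveVec d k ∧ alcoveVec d k < d + 1 := by
    unfold alcoveVec
    omega
  calc alcoveVec d k * x k ≤ alcoveVec d k * (x k * x k) :=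
        mul_le_mul_of_nonneg_left (pow_two (x k) ▸ Int.le_self_sq _) hk.1.le
    _ ≤ (d + 1) * (x k * x k) := mul_le_mul_of_nonneg_right hk.2.le (mul_self_nonneg _)

theorem isPotential_alcovePotential (hv : IsPositiveRoot v) :
    (rootPartition hv).IsPotential (alcovePotential d) := by
  intro x y hxy hrank
  obtain ⟨c, rfl⟩ := (sameLine_halfCoroot_iff hv).mp hxy
  set p := pairing (halfCoroot v) x with hp
  have hpair := pairing_halfCoroot_mul (x := x) hv.dotProduct_self_dvd_two
  have hgain : (alcovePotential d (x + c • v) : ℤ) - alcovePotential d x =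
      c * ((d + 1) * (v ⬝ᵥ v) * (p + c) - alcoveVec d ⬝ᵥ v) := by
    rw [alcovePotential_cast, alcovePotential_cast]
    simp only [dotProduct_add, add_dotProduct, dotProduct_smul, smul_dotProduct, smul_eq_mul,
      dotProduct_comm x v]
    linear_combination -(d + 1) * c * hpair
  rw [rank_rootPartition_lt_iff, pairing_halfCoroot_add_smul hv.dotProduct_self_dvd_two] at hrank
  have hpos := hv.alcoveVec_dotProduct_pos
  have hlt := hv.alcoveVec_dotProduct_lt
  rw [← Nat.cast_lt (α := ℤ), ← sub_pos, hgain]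
  rcases posIdx_lt_posIdx_add_two_mul hrank with ⟨hc, hpc⟩ | ⟨hc, hpc⟩
  · exact mul_pos hc (by nlinarith)
  · exact mul_pos_of_neg_of_neg hc (by nlinarith)

variable [NeZero d]

theorem exists_halfCoroot_eq_getD (d : ℕ) [NeZero d] (k : ℕ) : ∃ v, IsPositiveRoot v ∧
    halfCoroot v = (EvecList d).getD (k % (EvecList d).length) 0 := by
  have hpos : 0 < (EvecList d).length :=
    List.length_pos_of_mem (mem_evecList_iff.mpr ⟨_, .single 0, rfl⟩)
  rw [List.getD_eq_getElem _ _ (Nat.mod_lt k hpos)]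
  exact mem_evecList_iff.mp (List.getElem_mem _)

/-- The partition along the direction used in the `k`-th step of the cyclic rearrangement. -/
def cyclicPartition (d : ℕ) [NeZero d] (k : ℕ) : RankedPartition (ZLat d) :=
  rootPartition (exists_halfCoroot_eq_getD d k).choose_spec.1

theorem rearrange_cyclicPartition (k : ℕ) : (cyclicPartition d k).rearrange u =
    stepR ((EvecList d).getD (k % (EvecList d).length) 0) u := by
  rw [cyclicPartition, rearrange_rootPartition, (exists_halfCoroot_eq_getD d k).choose_spec.2]

theorem iterRearrange_cyclicPartition : iterRearrange (cyclicPartition d) u = iterR d u := by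
  funext k
  induction k with
  | zero => rfl
  | succ k ih => rw [iterRearrange, ih, rearrange_cyclicPartition, iterR]

theorem exists_rearrange_cyclicPartition_eq (hv : IsPositiveRoot v) :
    ∃ k, (cyclicPartition d k).rearrange u = (rootPartition hv).rearrange u := by
  obtain ⟨k, hk, hkv⟩ := List.mem_iff_getElem.mp (mem_evecList_iff.mpr ⟨v, hv, rfl⟩)
  refine ⟨k, ?_⟩
  rw [rearrange_cyclicPartition, rearrange_rootPartition, Nat.mod_eq_of_lt hk,
    List.getD_eq_getElem _ _ hk, hkv]

theorem isPotential_cyclicPartition (k : ℕ) :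
    (cyclicPartition d k).IsPotential (alcovePotential d) :=
  isPotential_alcovePotential _

theorem tendstoLevelwise_RZd (hu : Admissible u) :
    TendstoLevelwise (iterRearrange (cyclicPartition d) u) (RZd d u) :=
  tendstoLevelwise_of_tendsto isPotential_cyclicPartition hu fun x => by
    have hlim := exists_tendsto_iterRearrange isPotential_cyclicPartition hu x
    rw [iterRearrange_cyclicPartition] at hlim ⊢
    exact tendsto_nhds_limUnder hlim

theorem rearrange_rootPartition_eq_self (hu : Admissible u) (hRu : RZd d u = u)
    (hv : IsPositiveRoot v) : (rootPartition hv).rearrange u = u := by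
  obtain ⟨k, hk⟩ := exists_rearrange_cyclicPartition_eq (u := u) hv
  rw [← hk]
  refine rearrange_eq_self_of_tendstoLevelwise isPotential_cyclicPartition hu ?_ k
  simpa only [hRu] using tendstoLevelwise_RZd hu

end Lattice

/-! ### Positivity of strict Schwarz symmetric functions -/

section Positivity

open Matrix

variable {d : ℕ} {v x : ZLat d} {c : ℤ} {i j : Fin d} {u : ZLat d → ℝ≥0} {A : Set (ZLat d)}

/-- A set has no gaps in the spiral order of any line parallel to a positive root; the superlevel
sets of Schwarz symmetric functions have this property. -/
def IsRootLower (A : Set (ZLat d)) : Prop :=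
  ∀ ⦃v⦄ (hv : IsPositiveRoot v), (rootPartition hv).IsLower A

theorem isRootLower_support [NeZero d] (hu : Admissible u) (hRu : RZd d u = u) :
    IsRootLower {x | 0 < u x} := fun _ hv _ _ hxy hrank hx =>
  Set.mem_ofPred.mpr <| (Set.mem_ofPred.mp hx).trans_le <|
    (rootPartition hv).le_of_rearrange_eq_self hu (rearrange_rootPartition_eq_self hu hRu hv)
      hxy hrank

theorem IsRootLower.add_smul_mem (hA : IsRootLower A) (hv : IsPositiveRoot v) (hx : x ∈ A)
    (hc : posIdx (pairing (halfCoroot v) x + 2 * c) < posIdx (pairing (halfCoroot v) x)) :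
    x + c • v ∈ A := by
  rw [← pairing_halfCoroot_add_smul hv.dotProduct_self_dvd_two, ← rank_rootPartition_lt_iff hv]
    at hc
  exact hA hv ((sameLine_halfCoroot_iff hv).mpr ⟨c, rfl⟩) hc hx

theorem pairing_halfCoroot_single (i : Fin d) (x : ZLat d) :
    pairing (halfCoroot (Pi.single i 1)) x = 2 * x i := by
  simpa using pairing_halfCoroot_mul (x := x) (IsPositiveRoot.single i).dotProduct_self_dvd_two

theorem pairing_halfCoroot_add (hij : i < j) (x : ZLat d) :
    pairing (halfCoroot (Pi.single i 1 + Pi.single j 1)) x = x i + x j := by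
  have h := pairing_halfCoroot_mul (x := x) (IsPositiveRoot.add hij).dotProduct_self_dvd_two
  simp only [dotProduct_add, add_dotProduct, single_one_dotProduct, Pi.single_eq_same,
    Pi.single_eq_of_ne hij.ne, Pi.single_eq_of_ne hij.ne'] at h
  linarith

theorem IsRootLower.update_mem (hA : IsRootLower A) (hx : x ∈ A) {a : ℤ}
    (ha : a.natAbs < (x i).natAbs) : Function.update x i a ∈ A := by
  have hmem := hA.add_smul_mem (c := a - x i) (.single i) hx <| by
    rw [pairing_halfCoroot_single]
    unfold posIdx
    split_ifs <;> omega
  convert hmem using 1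
  ext k
  rcases eq_or_ne k i with rfl | hk
  · simp
  · simp [hk]

theorem IsRootLower.split_mem (hA : IsRootLower A) (hx : x ∈ A) (hij : i ≠ j) (hj : x j = 0) :
    x - (x i / 2) • (Pi.single i 1 + Pi.single j 1) ∈ A := by
  rcases eq_or_ne (x i / 2) 0 with h0 | h0
  · simpa [h0] using hx
  have hlt : posIdx (x i + 2 * -(x i / 2)) < posIdx (x i) := by
    unfold posIdx
    split_ifs <;> omega
  rw [sub_eq_add_neg, ← neg_smul]
  rcases hij.lt_or_gt with hij | hij
  · exact hA.add_smul_mem (.add hij) hx (by rwa [pairing_halfCoroot_add hij, hj, add_zero])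
  · rw [add_comm (Pi.single i 1)]
    exact hA.add_smul_mem (.add hij) hx (by rwa [pairing_halfCoroot_add hij, hj, zero_add])

theorem exists_forall_exists_natAbs_ge (hA : A.Infinite) :
    ∃ i, ∀ M : ℕ, ∃ x ∈ A, M ≤ (x i).natAbs := by
  by_contra! h
  choose M hM using h
  refine hA ((Set.finite_Icc (fun i => -(M i : ℤ)) fun i => (M i : ℤ)).subset fun x hx => ?_)
  have hcoord (i : Fin d) : -(M i : ℤ) ≤ x i ∧ x i ≤ M i := by
    have := hM i x hx
    omega
  exact ⟨fun i => (hcoord i).1, fun i => (hcoord i).2⟩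

theorem IsRootLower.exists_natAbs_ge_forall_mem (hA : IsRootLower A)
    (hi : ∀ M : ℕ, ∃ x ∈ A, M ≤ (x i).natAbs) (s : Finset (Fin d)) :
    ∀ M : ℕ, ∃ x ∈ A, M ≤ (x i).natAbs ∧ ∀ j ∈ s, M ≤ (x j).natAbs := by
  induction s using Finset.induction_on with
  | empty => simpa using hi
  | insert j s _ ih =>
    intro M
    obtain ⟨x, hx, hxi, hxs⟩ := ih (2 * M + 2)
    rcases eq_or_ne j i with rfl | hji
    · exact ⟨x, hx, by omega, Finset.forall_mem_insert _ _ _ |>.mpr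
        ⟨by omega, fun k hk => by linarith [hxs k hk]⟩⟩
    have hx' : Function.update x j 0 ∈ A := by
      rcases eq_or_ne (x j) 0 with h0 | h0
      · rwa [← h0, Function.update_eq_self]
      · exact hA.update_mem hx (by simpa [Int.natAbs_pos] using h0)
    have hsplit := hA.split_mem (i := i) hx' hji.symm (Function.update_self ..)
    rw [Function.update_of_ne hji.symm] at hsplit
    set z := Function.update x j 0 - (x i / 2) • (Pi.single i 1 + Pi.single j 1) with hz
    have hzi : z i = x i - x i / 2 := by simp [hz, hji.symm]
    have hzj : z j = -(x i / 2) := by simp [hz, hji]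
    refine ⟨z, hsplit, by omega, fun k hk => ?_⟩
    rcases eq_or_ne k j with rfl | hkj
    · omega
    rcases eq_or_ne k i with rfl | hki
    · omega
    have hzk : z k = x k := by simp [hz, hkj, hki]
    have := hxs k (Finset.mem_of_mem_insert_of_ne hk hkj)
    omega

theorem IsRootLower.eq_univ (hA : IsRootLower A) (hinf : A.Infinite) : A = Set.univ := by
  obtain ⟨i, hi⟩ := exists_forall_exists_natAbs_ge hinf
  refine Set.eq_univ_of_forall fun y => ?_
  obtain ⟨x, hx, -, hxy⟩ := hA.exists_natAbs_ge_forall_mem hi Finset.univ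
    (∑ j, (y j).natAbs + 1)
  have hpiece (s : Finset (Fin d)) : s.piecewise y x ∈ A := by
    induction s using Finset.induction_on with
    | empty => rwa [Finset.piecewise_empty]
    | insert j s hjs ih =>
      rw [Finset.piecewise_insert]
      refine hA.update_mem ih ?_
      rw [Finset.piecewise_eq_of_notMem _ _ _ hjs]
      exact (Nat.lt_succ_of_le (Finset.single_le_sum (f := fun k => (y k).natAbs)
        (fun _ _ => Nat.zero_le _) (Finset.mem_univ j))).trans_le (hxy j (Finset.mem_univ j))
  simpa only [Finset.piecewise_univ] using hpiece Finset.univ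

theorem StrictRan.injective_of_RZd_eq_self [NeZero d] (hs : StrictRan u) (hu : Admissible u)
    (hRu : RZd d u = u) : Function.Injective u := by
  have hsupport := (isRootLower_support hu hRu).eq_univ (hs.infinite_support hu)
  rw [← Set.injOn_univ, ← hsupport]
  exact hs.injOn_support hu

end Positivity

theorem stmt14_general (d : ℕ) [NeZero d] (u v : ZLat d → NNReal)
    (hu : Admissible u) (hv : Admissible v) :
    (∑' x : ZLat d, ((u x * v x : NNReal) : ENNReal) ≤
      ∑' x : ZLat d, ((RZd d u x * RZd d v x : NNReal) : ENNReal)) ∧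
    (RZd d u = u → StrictRan u →
      (∑' x : ZLat d, ((RZd d u x * RZd d v x : NNReal) : ENNReal)) < ⊤ →
      ((∑' x : ZLat d, ((u x * v x : NNReal) : ENNReal)) =
        (∑' x : ZLat d, ((RZd d u x * RZd d v x : NNReal) : ENNReal)) ↔ v = RZd d v)) := by
  have hlim := tendstoLevelwise_RZd hu
  have hvlim := tendstoLevelwise_RZd hv
  refine ⟨RankedPartition.tsum_iterRearrange_mul_le hu hv hlim hvlim 0, ?_⟩
  intro hRu hs hfin
  rw [hRu] at hlim hfin ⊢
  constructor
  · exact RankedPartition.eq_of_tsum_mul_eq isPotential_cyclicPartition hu hv hlim hvlim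
      (hs.injective_of_RZd_eq_self hu hRu) hfin.ne
  · intro hRv
    rw [← hRv]

/-- Discrete Hardy–Littlewood inequality, with the characterization of the equality
case. -/
theorem stmt14 (d : ℕ) (hd : 2 ≤ d) (u v : ZLat d → NNReal)
    (hu : Admissible u) (hv : Admissible v) :
    (∑' x : ZLat d, ((u x * v x : NNReal) : ENNReal) ≤
      ∑' x : ZLat d, ((RZd d u x * RZd d v x : NNReal) : ENNReal)) ∧
    (RZd d u = u → StrictRan u →
      (∑' x : ZLat d, ((RZd d u x * RZd d v x : NNReal) : ENNReal)) < ⊤ →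
      ((∑' x : ZLat d, ((u x * v x : NNReal) : ENNReal)) =
        (∑' x : ZLat d, ((RZd d u x * RZd d v x : NNReal) : ENNReal)) ↔ v = RZd d v)) := by
  have : NeZero d := ⟨by omega⟩
  exact stmt14_general d u v hu hv

end
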